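/- Let γ = (γ_j)_{j≥1} be non-increasing nonnegative weights with ∑_{j≥1} γ_j < ∞, and let δ > 0. Then there exists a constant C > 0 (depending only on γ and δ, independent of p and s) such that for every prime p and every s ∈ ℕ the Korobov point set Q_{p²,s} satisfies D*_γ(Q_{p²,s}) ≤ C·p^{−(1−δ)}. -/

import Mathlib

open Finset

/-- Local discrepancy of the point set `x` at the corner point `t`:
`Δ(t) = #{n : x_n ∈ [0,t)}/N − ∏_j t_j`. -/
noncomputable def localDisc {N s : ℕ} (x : Fin N → Fin s → ℝ) (t : Fin s → ℝ) : ℝ :=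
  ((univ.filter fun n => ∀ j, x n j < t j).card : ℝ) / N - ∏ j, t j

/-- `(z_u, 1)`: the vector `z` with all components whose index is not in `u`
replaced by `1`. -/
def projPoint {s : ℕ} (u : Finset (Fin s)) (z : Fin s → ℝ) : Fin s → ℝ :=
  fun j => if j ∈ u then z j else 1

/-- The weight `γ_u = ∏_{j ∈ u} γ_j` of a set of coordinates `u ⊆ {1,…,s}`;
coordinate `j : Fin s` carries weight `γ (j+1)` (weights are indexed from `1`). -/
noncomputable def weightOf {s : ℕ} (γ : ℕ → ℝ) (u : Finset (Fin s)) : ℝ :=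
  ∏ j ∈ u, γ (j.1 + 1)

/-- Weighted star-discrepancy
`D*_γ(x) = sup_{z ∈ [0,1]^s} max_{∅ ≠ u ⊆ [s]} γ_u |Δ(z_u,1)|`. -/
noncomputable def wStarDisc {N s : ℕ} (γ : ℕ → ℝ) (x : Fin N → Fin s → ℝ) : ℝ :=
  sSup {d : ℝ | ∃ z : Fin s → ℝ, (∀ j, z j ∈ Set.Icc (0:ℝ) 1) ∧
    ∃ u : Finset (Fin s), u.Nonempty ∧
      d = weightOf γ u * |localDisc x (projPoint u z)|}

/-- `N`-th minimal weighted star-discrepancy `disc_γ(N,s)`. -/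
noncomputable def wMinDisc (γ : ℕ → ℝ) (N s : ℕ) : ℝ :=
  sInf {d : ℝ | ∃ x : Fin N → Fin s → ℝ,
    (∀ n j, x n j ∈ Set.Ico (0:ℝ) 1) ∧ d = wStarDisc γ x}

/-- Korobov's `p`-set `P_{p,s}`: the points `x_n = ({n/p}, {n²/p}, …, {n^s/p})`
for `n = 0, 1, …, p−1`. -/
noncomputable def korobovP (p s : ℕ) : Fin p → Fin s → ℝ :=
  fun n j => Int.fract ((n.1 : ℝ) ^ (j.1 + 1) / p)

/-- Korobov's `p²`-set `Q_{p²,s}`: the points `x_n = ({n/p²}, {n²/p²}, …, {n^s/p²})`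
for `n = 0, 1, …, p²−1`. -/
noncomputable def korobovQ (p s : ℕ) : Fin (p ^ 2) → Fin s → ℝ :=
  fun n j => Int.fract ((n.1 : ℝ) ^ (j.1 + 1) / ((p : ℝ) ^ 2))

/-- The Hua–Wang multi-set `R_{p²,s}`: the `p²` points
`x_{a,k} = ({k/p}, {ak/p}, …, {a^{s−1}k/p})` for `a, k = 0, …, p−1`, counted with
multiplicity; here the index `n < p²` encodes `a = n / p` and `k = n % p`. -/
noncomputable def huaWangR (p s : ℕ) : Fin (p ^ 2) → Fin s → ℝ :=
  fun n j => Int.fract (((n.1 / p : ℕ) : ℝ) ^ j.1 * ((n.1 % p : ℕ) : ℝ) / p)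

/-!
Discrete Fourier analysis on `ℤ/p²` bounds the discrepancy of the points `(n, n², …, n^s)` by the
sum over the nonzero frequency vectors `h` of the product of the Fourier majorants of intervals
times `|S(h)| = |∑ n, e((h₁ n + ⋯ + h_s n^s) / p²)|`. If some `h_i` is prime to `p`, only the
critical points modulo `p` of the polynomial contribute to `S(h)`, whence `|S(h)| ≤ p D` with `D`
the degree. Otherwise `|S(h)| ≤ p²` is the best available, but multiples of `p` are so sparse that
the majorant of a nonzero one may be enlarged by a factor `p` while the sum of the majorants over
one coordinate stays at most `L = 3 + 3 log p`. Hence the projection onto the coordinates in `u`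
has discrepancy at most `2 D L^|u| / p`. Finally `D γ_D` is bounded, and the remaining product of
the `γ_j L` is at most `∏ (1 + γ_j L)`, which is `O(exp (ε L))` for every `ε > 0`, that is, a power
of `p` with arbitrarily small exponent.
-/

section Fourier

open scoped ZMod

theorem addChar_map_sum {ι A M : Type*} [AddCommMonoid A] [CommMonoid M] (ψ : AddChar A M)
    (s : Finset ι) (f : ι → A) : ψ (∑ i ∈ s, f i) = ∏ i ∈ s, ψ (f i) :=
  map_prod ψ.toMonoidHom (fun i ↦ Multiplicative.ofAdd (f i)) s

theorem two_mul_mul_one_sub_le_sin_pi_mul {t : ℝ} (h0 : 0 ≤ t) (h1 : t ≤ 1) :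
    2 * t * (1 - t) ≤ Real.sin (Real.pi * t) := by
  have jordan {r : ℝ} (hr0 : 0 ≤ r) (hr : r ≤ 1 / 2) : 2 * r ≤ Real.sin (Real.pi * r) := by
    have hle := Real.mul_le_sin (x := Real.pi * r) (by positivity) (by nlinarith [Real.pi_pos])
    rwa [← mul_assoc, div_mul_cancel₀ _ Real.pi_ne_zero] at hle
  rcases le_total t (1 / 2) with ht | ht
  · nlinarith [jordan h0 ht]
  · have hsymm : Real.sin (Real.pi * (1 - t)) = Real.sin (Real.pi * t) := by
      rw [mul_sub, mul_one, Real.sin_pi_sub]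
    nlinarith [jordan (r := 1 - t) (by linarith) (by linarith)]

theorem norm_geom_sum_mul_norm_sub_one_le {𝕜 : Type*} [NormedDivisionRing 𝕜] {z : 𝕜}
    (hz : ‖z‖ = 1) (m : ℕ) :
    ‖∑ k ∈ range m, z ^ k‖ * ‖z - 1‖ ≤ 2 := by
  rw [← norm_mul, geom_sum_mul]
  exact (norm_sub_le _ _).trans (by norm_num [hz])

theorem sum_range_inv_le_one_add_log (n : ℕ) :
    ∑ k ∈ range n, (k : ℝ)⁻¹ ≤ 1 + Real.log n := by
  calc ∑ k ∈ range n, (k : ℝ)⁻¹ ≤ ∑ k ∈ range (n + 1), (k : ℝ)⁻¹ := by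
        rw [sum_range_succ]
        exact le_add_of_nonneg_right (by positivity)
    _ = harmonic n := by simp [sum_range_succ', harmonic]
    _ ≤ 1 + Real.log n := harmonic_le_one_add_log n

variable {N : ℕ}

/-- The indicator function of the residues `0, 1, …, m - 1` modulo `N`, with complex values so
that its discrete Fourier transform makes sense. -/
noncomputable def intervalIndicator (N m : ℕ) (x : ZMod N) : ℂ := if x.val < m then 1 else 0

/-- A bound for the normalised discrete Fourier coefficients at `h` of all the indicator functions
`intervalIndicator N m`: `1` at `h = 0`, and otherwise `N / (2 v (N - v))` with `v = h.val`, which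
is written as a mean of reciprocals so that summing over `h` produces harmonic sums. -/
noncomputable def intervalMajorant (h : ZMod N) : ℝ :=
  if h = 0 then 1 else ((h.val : ℝ)⁻¹ + ((-h).val : ℝ)⁻¹) / 2

theorem intervalMajorant_nonneg (h : ZMod N) : 0 ≤ intervalMajorant h := by
  unfold intervalMajorant
  split_ifs <;> positivity

variable [NeZero N]

theorem sum_val_eq_sum_range {M : Type*} [AddCommMonoid M] (f : ℕ → M) :
    ∑ x : ZMod N, f x.val = ∑ k ∈ range N, f k :=
  sum_nbij' ZMod.val (fun k ↦ (k : ZMod N)) (fun x _ ↦ mem_range.2 x.val_lt)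
    (fun _ _ ↦ mem_univ _) (fun x _ ↦ ZMod.natCast_zmod_val x)
    (fun _ hk ↦ ZMod.val_cast_of_lt (mem_range.1 hk)) fun _ _ ↦ rfl

theorem dft_intervalIndicator {m : ℕ} (hm : m ≤ N) (h : ZMod N) :
    𝓕 (intervalIndicator N m) h = ∑ k ∈ range m, ZMod.stdAddChar (-h) ^ k := by
  have hterm (x : ZMod N) : ZMod.stdAddChar (-(x * h)) • intervalIndicator N m x =
      if x.val < m then ZMod.stdAddChar (-h) ^ x.val else 0 := by
    rw [intervalIndicator, smul_eq_mul, mul_ite, mul_one, mul_zero, ← AddChar.map_nsmul_eq_pow,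
      nsmul_eq_mul, ZMod.natCast_zmod_val, mul_neg]
  simp only [ZMod.dft_apply, hterm]
  rw [sum_val_eq_sum_range fun k ↦ if k < m then ZMod.stdAddChar (-h) ^ k else 0, ← sum_filter]
  refine sum_congr ?_ fun _ _ ↦ rfl
  ext k
  simp only [mem_filter, mem_range]
  omega

theorem norm_stdAddChar_sub_one (h : ZMod N) :
    ‖ZMod.stdAddChar h - 1‖ = 2 * Real.sin (Real.pi * (h.val / N)) := by
  have hle : (h.val / N : ℝ) ≤ 1 := div_le_one_of_le₀ (mod_cast h.val_lt.le) (by positivity)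
  have hsin : 0 ≤ Real.sin (Real.pi * (h.val / N)) :=
    Real.sin_nonneg_of_nonneg_of_le_pi (by positivity) (by nlinarith [Real.pi_pos])
  have hexp : ZMod.stdAddChar h = Complex.exp (Complex.I * (2 * Real.pi * (h.val / N) : ℝ)) := by
    rw [ZMod.stdAddChar_apply, ZMod.toCircle_apply]
    congr 1
    push_cast
    ring
  rw [hexp, Complex.norm_exp_I_mul_ofReal_sub_one, mul_assoc, mul_div_cancel_left₀ _ two_ne_zero,
    Real.norm_of_nonneg (by positivity)]

theorem inv_mul_dft_intervalIndicator_zero {m : ℕ} (hm : m ≤ N) :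
    (N : ℂ)⁻¹ * 𝓕 (intervalIndicator N m) 0 = (m / N : ℝ) := by
  simp [dft_intervalIndicator hm, div_eq_inv_mul]

theorem norm_inv_mul_dft_intervalIndicator_le {m : ℕ} (hm : m ≤ N) (h : ZMod N) :
    ‖(N : ℂ)⁻¹ * 𝓕 (intervalIndicator N m) h‖ ≤ intervalMajorant h := by
  have hN : (0 : ℝ) < N := mod_cast NeZero.pos N
  rcases eq_or_ne h 0 with rfl | hh
  · rw [inv_mul_dft_intervalIndicator_zero hm, intervalMajorant, if_pos rfl, Complex.norm_real,
      Real.norm_of_nonneg (by positivity)]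
    exact div_le_one_of_le₀ (mod_cast hm) hN.le
  set v : ℝ := ((-h).val : ℝ) with hv
  have hv0 : 0 < v := Nat.cast_pos.2 (ZMod.val_pos.2 (neg_ne_zero.2 hh))
  have hvN : v < N := Nat.cast_lt.2 (-h).val_lt
  have hval : (h.val : ℝ) = N - v := by
    have hneg := ZMod.neg_val (-h)
    rw [neg_neg, if_neg (neg_ne_zero.2 hh)] at hneg
    rw [hneg, Nat.cast_sub (-h).val_lt.le]
  have hsin : 4 * (v / N) * (1 - v / N) ≤ ‖ZMod.stdAddChar (-h) - 1‖ := by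
    rw [norm_stdAddChar_sub_one, ← hv]
    linarith [two_mul_mul_one_sub_le_sin_pi_mul (by positivity) ((div_le_one hN).2 hvN.le)]
  have hpos : 0 < 4 * (v / N) * (1 - v / N) := by
    have := sub_pos.2 ((div_lt_one hN).2 hvN)
    positivity
  rw [norm_mul, norm_inv, Complex.norm_natCast, dft_intervalIndicator hm, intervalMajorant,
    if_neg hh, hval]
  calc (N : ℝ)⁻¹ * ‖∑ k ∈ range m, ZMod.stdAddChar (-h) ^ k‖
      ≤ (N : ℝ)⁻¹ * (2 / (4 * (v / N) * (1 - v / N))) := by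
        gcongr
        rw [le_div_iff₀ hpos]
        exact (mul_le_mul_of_nonneg_left hsin (norm_nonneg _)).trans
          (norm_geom_sum_mul_norm_sub_one_le (AddChar.norm_apply _ _) m)
    _ = ((N - v)⁻¹ + v⁻¹) / 2 := by
        have := (sub_pos.2 hvN).ne'
        field_simp
        ring

theorem sum_inv_val_of_dvd_le {d : ℕ} (hd : d ∣ N) :
    ∑ h : ZMod N with d ∣ h.val, (h.val : ℝ)⁻¹ ≤ (1 + Real.log (N / d)) / d := by
  obtain ⟨M, rfl⟩ := hd
  have hd0 : 0 < d := Nat.pos_of_ne_zero fun h0 ↦ NeZero.ne (d * M) (by simp [h0])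
  calc ∑ h : ZMod (d * M) with d ∣ h.val, (h.val : ℝ)⁻¹
      = ∑ k ∈ range (d * M) with d ∣ k, (k : ℝ)⁻¹ := by
        simpa only [sum_filter] using
          sum_val_eq_sum_range (N := d * M) fun k ↦ if d ∣ k then (k : ℝ)⁻¹ else 0
    _ = ∑ j ∈ range M, ((d * j : ℕ) : ℝ)⁻¹ := by
        refine sum_nbij' (· / d) (d * ·) ?_ ?_ ?_ ?_ ?_
        · exact fun k hk ↦ mem_range.2 (Nat.div_lt_of_lt_mul (mem_range.1 (mem_filter.1 hk).1))
        · exact fun j hj ↦ mem_filter.2 ⟨mem_range.2 (Nat.mul_lt_mul_of_pos_left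
            (mem_range.1 hj) hd0), dvd_mul_right d j⟩
        · exact fun k hk ↦ Nat.mul_div_cancel' (mem_filter.1 hk).2
        · exact fun j _ ↦ Nat.mul_div_cancel_left j hd0
        · exact fun k hk ↦ by rw [Nat.mul_div_cancel' (mem_filter.1 hk).2]
    _ = (∑ j ∈ range M, (j : ℝ)⁻¹) / d := by
        simp only [Nat.cast_mul, mul_inv, ← mul_sum, div_eq_inv_mul]
    _ ≤ (1 + Real.log ((d * M : ℕ) / d)) / d := by
        rw [Nat.cast_mul, mul_div_cancel_left₀ _ (mod_cast hd0.ne')]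
        gcongr
        exact sum_range_inv_le_one_add_log M

theorem dvd_neg_val_iff {d : ℕ} (hd : d ∣ N) (h : ZMod N) : d ∣ (-h).val ↔ d ∣ h.val := by
  simp only [← ZMod.natCast_eq_zero_iff, ← ZMod.cast_eq_val, ZMod.cast_neg hd, neg_eq_zero]

theorem sum_intervalMajorant_of_dvd_le {d : ℕ} (hd : d ∣ N) :
    ∑ h : ZMod N with h ≠ 0 ∧ d ∣ h.val, intervalMajorant h ≤ (1 + Real.log (N / d)) / d := by
  have hneg : ∑ h : ZMod N with d ∣ h.val, ((-h).val : ℝ)⁻¹ =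
      ∑ h : ZMod N with d ∣ h.val, (h.val : ℝ)⁻¹ := by
    simp only [sum_filter]
    rw [← Equiv.sum_comp (Equiv.neg _)]
    simp only [Equiv.neg_apply, neg_neg, dvd_neg_val_iff hd]
  calc ∑ h : ZMod N with h ≠ 0 ∧ d ∣ h.val, intervalMajorant h
      = ∑ h : ZMod N with h ≠ 0 ∧ d ∣ h.val, ((h.val : ℝ)⁻¹ + ((-h).val : ℝ)⁻¹) / 2 :=
        sum_congr rfl fun h hh ↦ if_neg (mem_filter.1 hh).2.1
    _ ≤ ∑ h : ZMod N with d ∣ h.val, ((h.val : ℝ)⁻¹ + ((-h).val : ℝ)⁻¹) / 2 :=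
        sum_le_sum_of_subset_of_nonneg (monotone_filter_right _ fun _ _ hh ↦ hh.2)
          fun _ _ _ ↦ by positivity
    _ = ∑ h : ZMod N with d ∣ h.val, (h.val : ℝ)⁻¹ := by
        rw [← sum_div, sum_add_distrib, hneg, add_self_div_two]
    _ ≤ (1 + Real.log (N / d)) / d := sum_inv_val_of_dvd_le hd

variable {X ι : Type*} [Fintype X] [Fintype ι] [DecidableEq ι]

theorem sum_prod_eq_sum_prod_dft_mul_sum (Φ : ι → ZMod N → ℂ) (a : X → ι → ZMod N) :
    ∑ x, ∏ i, Φ i (a x i) = ∑ h : ι → ZMod N,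
      (∏ i, (N : ℂ)⁻¹ * 𝓕 (Φ i) (h i)) * ∑ x, ZMod.stdAddChar (∑ i, h i * a x i) := by
  have inversion (i : ι) (y : ZMod N) :
      Φ i y = ∑ k, (N : ℂ)⁻¹ * 𝓕 (Φ i) k * ZMod.stdAddChar (k * y) := by
    conv_lhs => rw [← LinearEquiv.symm_apply_apply ZMod.dft (Φ i), ZMod.invDFT_apply]
    rw [smul_eq_mul, mul_sum]
    exact sum_congr rfl fun k _ ↦ by rw [smul_eq_mul, mul_comm (ZMod.stdAddChar _), mul_assoc]
  simp only [mul_sum]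
  rw [sum_comm]
  refine sum_congr rfl fun x _ ↦ ?_
  simp only [inversion, prod_univ_sum, Fintype.piFinset_univ, prod_mul_distrib, addChar_map_sum]

theorem abs_card_sub_card_mul_prod_le (a : X → ι → ZMod N) {m : ι → ℕ} (hm : ∀ i, m i ≤ N) :
    |(#{x | ∀ i, (a x i).val < m i} : ℝ) - Fintype.card X * ∏ i, (m i / N : ℝ)| ≤
      ∑ h : ι → ZMod N with h ≠ 0,
        (∏ i, intervalMajorant (h i)) * ‖∑ x, ZMod.stdAddChar (∑ i, h i * a x i)‖ := by
  set c : (ι → ZMod N) → ℂ := fun h ↦ ∏ i, (N : ℂ)⁻¹ * 𝓕 (intervalIndicator N (m i)) (h i)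
  set S : (ι → ZMod N) → ℂ := fun h ↦ ∑ x, ZMod.stdAddChar (∑ i, h i * a x i)
  have hcount : (#{x | ∀ i, (a x i).val < m i} : ℂ) = ∑ h, c h * S h := by
    rw [← sum_prod_eq_sum_prod_dft_mul_sum, card_filter]
    simp [intervalIndicator, prod_ite_zero]
  have hzero : c 0 * S 0 = (Fintype.card X * ∏ i, (m i / N : ℝ) : ℝ) := by
    simp only [c, S, Pi.zero_apply, fun i ↦ inv_mul_dft_intervalIndicator_zero (hm i)]
    simp [mul_comm]
  have hdiff : ((#{x | ∀ i, (a x i).val < m i} - Fintype.card X * ∏ i, (m i / N : ℝ) : ℝ) : ℂ) =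
      ∑ h with h ≠ 0, c h * S h := by
    rw [Complex.ofReal_sub, ← hzero, Complex.ofReal_natCast, hcount, filter_ne',
      sum_erase_eq_sub (mem_univ _)]
  rw [← Real.norm_eq_abs, ← Complex.norm_real, hdiff]
  refine (norm_sum_le _ _).trans (sum_le_sum fun h _ ↦ ?_)
  rw [norm_mul, norm_prod]
  gcongr with i
  exact norm_inv_mul_dft_intervalIndicator_le (hm i) (h i)

end Fourier

-- Translation by `ε * b` permutes `R`, and since `ε ^ 2 = 0` it changes `F` exactly by the linear
-- Taylor term; averaging over `b` removes every point at which this term does not vanish.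
open Polynomial in
theorem sum_addChar_eval_eq_sum_filter {R R' : Type*} [CommRing R] [Fintype R] [DecidableEq R]
    [CommRing R'] [IsDomain R'] [CharZero R'] {ψ : AddChar R R'} (hψ : ψ.IsPrimitive) {ε : R}
    (hε : ε ^ 2 = 0) (F : R[X]) :
    ∑ n, ψ (F.eval n) = ∑ n with F.derivative.eval n * ε = 0, ψ (F.eval n) := by
  have taylor (n b : R) : F.eval (n + ε * b) = F.eval n + b * (F.derivative.eval n * ε) := by
    obtain ⟨k, hk⟩ := F.binomExpansion n (ε * b)
    rw [hk, mul_pow, hε]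
    ring
  have shift (b : R) :
      ∑ n, ψ (F.eval n) = ∑ n, ψ (F.eval n) * ψ (b * (F.derivative.eval n * ε)) := by
    rw [← Equiv.sum_comp (Equiv.addRight (ε * b))]
    simp only [Equiv.coe_addRight, taylor, AddChar.map_add_eq_mul]
  have hcard : (Fintype.card R : R') ≠ 0 := Nat.cast_ne_zero.2 Fintype.card_ne_zero
  refine mul_left_cancel₀ hcard ?_
  calc Fintype.card R * ∑ n, ψ (F.eval n)
      = ∑ _b : R, ∑ n, ψ (F.eval n) := by simp
    _ = ∑ n, ψ (F.eval n) * ∑ b, ψ (b * (F.derivative.eval n * ε)) := by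
        rw [sum_congr rfl fun b _ ↦ shift b, sum_comm]
        simp only [mul_sum]
    _ = Fintype.card R * ∑ n with F.derivative.eval n * ε = 0, ψ (F.eval n) := by
        simp only [AddChar.sum_mulShift _ hψ, Nat.cast_ite, Nat.cast_zero, mul_ite, mul_zero,
          ← sum_filter]
        rw [mul_sum, sum_congr rfl fun _ _ ↦ mul_comm _ _]

theorem card_mul_card_filter_mem_of_surjective {G H : Type*} [AddGroup G] [Fintype G] [AddGroup H]
    [Fintype H] [DecidableEq H] {f : G →+ H} (hf : Function.Surjective f) (S : Finset H) :
    Fintype.card H * #{g | f g ∈ S} = Fintype.card G * #S := by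
  have hfiber (y : H) : #{g | f g = y} = #{g | f g = 0} :=
    AddMonoidHom.card_fiber_eq_of_mem_range f (hf y) (hf 0)
  have hcount (T : Finset H) : #{g | f g ∈ T} = #T * #{g | f g = 0} := by
    have hmaps : Set.MapsTo f ↑({g | f g ∈ T} : Finset G) ↑T := fun g hg ↦ (mem_filter.1 hg).2
    rw [card_eq_sum_card_fiberwise hmaps, ← smul_eq_mul, ← sum_const]
    refine sum_congr rfl fun y hy ↦ ?_
    rw [filter_filter, ← hfiber y]
    congr 1 with g
    aesop
  have hG : Fintype.card G = Fintype.card H * #{g | f g = 0} := by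
    simpa using hcount univ
  rw [hcount, hG]
  ring

open Polynomial in
theorem derivative_ne_zero_of_natDegree_lt {R : Type*} [CommRing R] [IsDomain R] {p : ℕ}
    [CharP R p] {f : R[X]} (h0 : f.natDegree ≠ 0) (hp : f.natDegree < p) : f.derivative ≠ 0 := by
  intro hf
  have hdeg := congrArg natDegree (expand_contract p hf (by omega))
  rw [natDegree_expand] at hdeg
  exact Nat.not_dvd_of_pos_of_lt (Nat.pos_of_ne_zero h0) hp ⟨_, hdeg.symm.trans (mul_comm _ _)⟩

section PrimeSquare

variable (p : ℕ)

/-- The reduction homomorphism `ℤ/p² → ℤ/p`. -/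
def sqReduction : ZMod (p ^ 2) →+* ZMod p :=
  ZMod.castHom (dvd_pow_self p two_ne_zero) (ZMod p)

variable {p} [Fact p.Prime]

theorem sqReduction_eq_zero_iff_dvd_val {x : ZMod (p ^ 2)} :
    sqReduction p x = 0 ↔ p ∣ x.val := by
  rw [sqReduction, ZMod.castHom_apply, ZMod.cast_eq_val, ZMod.natCast_eq_zero_iff]

theorem mul_natCast_eq_zero_iff {x : ZMod (p ^ 2)} :
    x * (p : ZMod (p ^ 2)) = 0 ↔ sqReduction p x = 0 := by
  rw [sqReduction_eq_zero_iff_dvd_val]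
  calc x * (p : ZMod (p ^ 2)) = 0 ↔ p ^ 2 ∣ x.val * p := by
        rw [← ZMod.natCast_eq_zero_iff, Nat.cast_mul, ZMod.natCast_zmod_val]
    _ ↔ p * p ∣ x.val * p := Eq.to_iff (congrArg (· ∣ x.val * p) (sq p))
    _ ↔ p ∣ x.val := Nat.mul_dvd_mul_iff_right (Fact.out : p.Prime).pos

theorem card_filter_derivative_mul_natCast_eq_zero_le {F : Polynomial (ZMod (p ^ 2))}
    (hF : (F.map (sqReduction p)).derivative ≠ 0) :
    #{n : ZMod (p ^ 2) | F.derivative.eval n * (p : ZMod (p ^ 2)) = 0} ≤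
      p * (F.map (sqReduction p)).natDegree := by
  set f := F.map (sqReduction p) with hf
  have hroot (n : ZMod (p ^ 2)) : F.derivative.eval n * (p : ZMod (p ^ 2)) = 0 ↔
      sqReduction p n ∈ f.derivative.roots.toFinset := by
    rw [mul_natCast_eq_zero_iff, Multiset.mem_toFinset, Polynomial.mem_roots hF,
      Polynomial.IsRoot.def, hf, Polynomial.derivative_map, Polynomial.eval_map_apply]
  have hcount := card_mul_card_filter_mem_of_surjective (f := (sqReduction p).toAddMonoidHom)
    (ZMod.ringHom_surjective _) f.derivative.roots.toFinset
  rw [ZMod.card, ZMod.card] at hcount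
  simp only [hroot]
  calc #{n : ZMod (p ^ 2) | sqReduction p n ∈ f.derivative.roots.toFinset}
      = p * #f.derivative.roots.toFinset :=
        Nat.eq_of_mul_eq_mul_left (Fact.out : p.Prime).pos (hcount.trans (by ring))
    _ ≤ p * f.natDegree := by
        gcongr
        calc #f.derivative.roots.toFinset ≤ f.derivative.natDegree :=
              (Multiset.toFinset_card_le _).trans (Polynomial.card_roots' _)
          _ ≤ f.natDegree := (Polynomial.natDegree_derivative_le f).trans (Nat.sub_le _ _)

theorem norm_sum_stdAddChar_le_card {N : ℕ} [NeZero N] {X : Type*} (s : Finset X)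
    (a : X → ZMod N) : ‖∑ x ∈ s, ZMod.stdAddChar (a x)‖ ≤ #s := by
  simpa only [AddChar.norm_apply, sum_const, nsmul_one] using
    norm_sum_le s fun x ↦ ZMod.stdAddChar (a x)

theorem norm_sum_stdAddChar_eval_le {F : Polynomial (ZMod (p ^ 2))}
    (hF : (F.map (sqReduction p)).natDegree ≠ 0) :
    ‖∑ n, ZMod.stdAddChar (F.eval n)‖ ≤ p * (F.map (sqReduction p)).natDegree := by
  -- In degree at least `p` the derivative may vanish modulo `p`, but the bound is trivial there.
  rcases lt_or_ge (F.map (sqReduction p)).natDegree p with hlt | hge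
  · have hp2 : (p : ZMod (p ^ 2)) ^ 2 = 0 := by exact_mod_cast ZMod.natCast_self (p ^ 2)
    rw [sum_addChar_eval_eq_sum_filter (ZMod.isPrimitive_stdAddChar _) hp2]
    refine (norm_sum_stdAddChar_le_card _ _).trans ?_
    exact_mod_cast card_filter_derivative_mul_natCast_eq_zero_le
      (derivative_ne_zero_of_natDegree_lt hF hlt)
  · refine (norm_sum_stdAddChar_le_card _ _).trans ?_
    rw [card_univ, ZMod.card]
    exact_mod_cast (sq p).le.trans (Nat.mul_le_mul_left p hge)

theorem norm_sum_stdAddChar_sum_mul_pow_le {ι : Type*} [Fintype ι] {e : ι → ℕ}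
    (he : Function.Injective e) (he0 : ∀ i, e i ≠ 0) {D : ℕ} (heD : ∀ i, e i ≤ D)
    {h : ι → ZMod (p ^ 2)} {i : ι} (hi : sqReduction p (h i) ≠ 0) :
    ‖∑ n, ZMod.stdAddChar (∑ i, h i * n ^ e i)‖ ≤ p * D := by
  set F : Polynomial (ZMod (p ^ 2)) := ∑ i, Polynomial.C (h i) * Polynomial.X ^ e i with hFdef
  have hcoeff : F.coeff (e i) = h i := by
    classical
    simp [hFdef, Polynomial.finsetSum_coeff, he.eq_iff]
  have hdeg : F.natDegree ≤ D := Polynomial.natDegree_sum_le_of_forall_le _ _ fun i _ ↦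
    (Polynomial.natDegree_C_mul_X_pow_le _ _).trans (heD i)
  have hF : (F.map (sqReduction p)).natDegree ≠ 0 := by
    have hle : e i ≤ (F.map (sqReduction p)).natDegree :=
      Polynomial.le_natDegree_of_ne_zero (by rwa [Polynomial.coeff_map, hcoeff])
    exact fun h0 ↦ he0 i (Nat.le_zero.1 (h0 ▸ hle))
  calc ‖∑ n, ZMod.stdAddChar (∑ i, h i * n ^ e i)‖
      = ‖∑ n, ZMod.stdAddChar (F.eval n)‖ := by simp [hFdef, Polynomial.eval_finsetSum]
    _ ≤ p * (F.map (sqReduction p)).natDegree := norm_sum_stdAddChar_eval_le hF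
    _ ≤ p * D := by
        gcongr
        exact Polynomial.natDegree_map_le.trans hdeg

/-- The majorant `intervalMajorant` with an additional factor `p` at the nonzero frequencies
divisible by `p`. When all the coordinates of a frequency vector are divisible by `p`, the
exponential sum has no cancellation, and this factor makes up for it. -/
noncomputable def korobovMajorant (h : ZMod (p ^ 2)) : ℝ :=
  if h ≠ 0 ∧ p ∣ h.val then p * intervalMajorant h else intervalMajorant h

theorem intervalMajorant_le_korobovMajorant (h : ZMod (p ^ 2)) :
    intervalMajorant h ≤ korobovMajorant h := by
  unfold korobovMajorant
  split_ifs
  · exact le_mul_of_one_le_left (intervalMajorant_nonneg h)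
      (mod_cast (Fact.out : p.Prime).one_le)
  · exact le_rfl

theorem korobovMajorant_nonneg (h : ZMod (p ^ 2)) : 0 ≤ korobovMajorant h :=
  (intervalMajorant_nonneg h).trans (intervalMajorant_le_korobovMajorant h)

theorem sum_korobovMajorant_le : ∑ h : ZMod (p ^ 2), korobovMajorant h ≤ 3 + 3 * Real.log p := by
  have hp : (0 : ℝ) < p := mod_cast (Fact.out : p.Prime).pos
  have hsplit (h : ZMod (p ^ 2)) : korobovMajorant h ≤ (if h = 0 then 1 else 0) +
      (if h ≠ 0 ∧ 1 ∣ h.val then intervalMajorant h else 0) +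
      p * (if h ≠ 0 ∧ p ∣ h.val then intervalMajorant h else 0) := by
    have := intervalMajorant_nonneg h
    by_cases h0 : h = 0
    · simp [korobovMajorant, intervalMajorant, h0]
    · by_cases hdvd : p ∣ h.val <;> simp [korobovMajorant, h0, hdvd, this]
  have hall := sum_intervalMajorant_of_dvd_le (one_dvd (p ^ 2))
  have hdvd := sum_intervalMajorant_of_dvd_le (dvd_pow_self p two_ne_zero)
  rw [sum_filter] at hall hdvd
  calc ∑ h : ZMod (p ^ 2), korobovMajorant h
      ≤ 1 + (1 + Real.log ((p ^ 2 : ℕ) / (1 : ℕ))) / (1 : ℕ) +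
          p * ((1 + Real.log ((p ^ 2 : ℕ) / p)) / p) := by
        refine (sum_le_sum fun h _ ↦ hsplit h).trans ?_
        rw [sum_add_distrib, sum_add_distrib, ← mul_sum, sum_ite_eq' univ, if_pos (mem_univ _)]
        gcongr
    _ = 3 + 3 * Real.log p := by
        have hlog : ((p ^ 2 : ℕ) / p : ℝ) = p := by
          push_cast
          field_simp
        rw [hlog, mul_div_cancel₀ _ hp.ne']
        push_cast
        rw [div_one, div_one, Real.log_pow]
        push_cast
        ring

section Curve

variable {ι : Type*} [Fintype ι] {e : ι → ℕ} {D : ℕ}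

theorem natCast_mul_prod_intervalMajorant_le {h : ι → ZMod (p ^ 2)} {i : ι} (hi : h i ≠ 0)
    (hdvd : p ∣ (h i).val) : p * ∏ i, intervalMajorant (h i) ≤ ∏ i, korobovMajorant (h i) := by
  classical
  have hfactor : p * intervalMajorant (h i) = korobovMajorant (h i) := (if_pos ⟨hi, hdvd⟩).symm
  rw [← mul_prod_erase univ _ (mem_univ i), ← mul_assoc, hfactor,
    ← mul_prod_erase univ (fun i ↦ korobovMajorant (h i)) (mem_univ i)]
  gcongr
  · exact korobovMajorant_nonneg _
  · exact fun _ _ ↦ intervalMajorant_nonneg _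
  · exact intervalMajorant_le_korobovMajorant _

theorem prod_intervalMajorant_mul_norm_sum_le (he : Function.Injective e) (he0 : ∀ i, e i ≠ 0)
    (heD : ∀ i, e i ≤ D) {h : ι → ZMod (p ^ 2)} (hh : h ≠ 0) :
    (∏ i, intervalMajorant (h i)) * ‖∑ n, ZMod.stdAddChar (∑ i, h i * n ^ e i)‖ ≤
      (∏ i, korobovMajorant (h i)) * (p * D) := by
  by_cases hall : ∀ i, p ∣ (h i).val
  · obtain ⟨i, hi⟩ := Function.ne_iff.1 hh
    have hD : (1 : ℝ) ≤ D := mod_cast (Nat.one_le_iff_ne_zero.2 (he0 i)).trans (heD i)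
    have htrivial : ‖∑ n, ZMod.stdAddChar (∑ i, h i * n ^ e i)‖ ≤ (p : ℝ) ^ 2 :=
      (norm_sum_stdAddChar_le_card univ _).trans_eq
        (by rw [card_univ, ZMod.card, Nat.cast_pow])
    calc (∏ i, intervalMajorant (h i)) * ‖∑ n, ZMod.stdAddChar (∑ i, h i * n ^ e i)‖
        ≤ (∏ i, intervalMajorant (h i)) * (p : ℝ) ^ 2 := by
          gcongr
          exact prod_nonneg fun _ _ ↦ intervalMajorant_nonneg _
      _ = (p * ∏ i, intervalMajorant (h i)) * (p * 1) := by ring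
      _ ≤ (∏ i, korobovMajorant (h i)) * (p * D) := by
          gcongr
          · exact prod_nonneg fun _ _ ↦ korobovMajorant_nonneg _
          · exact natCast_mul_prod_intervalMajorant_le hi (hall i)
  · obtain ⟨i, hi⟩ := not_forall.1 hall
    gcongr with i
    · exact prod_nonneg fun _ _ ↦ korobovMajorant_nonneg _
    · exact fun _ _ ↦ intervalMajorant_nonneg _
    · exact intervalMajorant_le_korobovMajorant _
    · exact norm_sum_stdAddChar_sum_mul_pow_le he he0 heD
        (mt sqReduction_eq_zero_iff_dvd_val.1 hi)

theorem abs_card_pow_val_lt_sub_le (he : Function.Injective e) (he0 : ∀ i, e i ≠ 0)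
    (heD : ∀ i, e i ≤ D) {m : ι → ℕ} (hm : ∀ i, m i ≤ p ^ 2) :
    |(#{n : ZMod (p ^ 2) | ∀ i, (n ^ e i).val < m i} : ℝ) / (p ^ 2 : ℕ) -
        ∏ i, (m i / (p ^ 2 : ℕ) : ℝ)| ≤ D / p * (3 + 3 * Real.log p) ^ Fintype.card ι := by
  classical
  have hp : (0 : ℝ) < p := mod_cast (Fact.out : p.Prime).pos
  have hN : (0 : ℝ) < (p ^ 2 : ℕ) := mod_cast NeZero.pos (p ^ 2)
  have hfourier := abs_card_sub_card_mul_prod_le (fun (n : ZMod (p ^ 2)) i ↦ n ^ e i) hm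
  rw [ZMod.card] at hfourier
  rw [div_sub' hN.ne', abs_div, abs_of_pos hN, div_le_iff₀ hN]
  calc |(#{n : ZMod (p ^ 2) | ∀ i, (n ^ e i).val < m i} : ℝ) -
        (p ^ 2 : ℕ) * ∏ i, (m i / (p ^ 2 : ℕ) : ℝ)|
      ≤ ∑ h : ι → ZMod (p ^ 2) with h ≠ 0, (∏ i, korobovMajorant (h i)) * (p * D) :=
        hfourier.trans <| sum_le_sum fun h hh ↦
          prod_intervalMajorant_mul_norm_sum_le he he0 heD (mem_filter.1 hh).2
    _ ≤ ∑ h : ι → ZMod (p ^ 2), (∏ i, korobovMajorant (h i)) * (p * D) :=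
        sum_le_sum_of_subset_of_nonneg (filter_subset _ _) fun h _ _ ↦
          mul_nonneg (prod_nonneg fun _ _ ↦ korobovMajorant_nonneg _) (by positivity)
    _ = (∑ h : ZMod (p ^ 2), korobovMajorant h) ^ Fintype.card ι * (p * D) := by
        rw [← sum_mul, ← card_univ, ← prod_const, prod_univ_sum, Fintype.piFinset_univ]
    _ ≤ (3 + 3 * Real.log p) ^ Fintype.card ι * (p * D) := by
        gcongr
        · exact sum_nonneg fun h _ ↦ korobovMajorant_nonneg h
        · exact sum_korobovMajorant_le
    _ = D / p * (3 + 3 * Real.log p) ^ Fintype.card ι * (p ^ 2 : ℕ) := by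
        push_cast
        field_simp

end Curve

end PrimeSquare

section LocalDiscrepancy

theorem abs_prod_sub_prod_le_card_mul {ι : Type*} {s : Finset ι} {a b : ι → ℝ} {ε : ℝ}
    (ha : ∀ i ∈ s, a i ∈ Set.Icc (0 : ℝ) 1) (hb : ∀ i ∈ s, b i ∈ Set.Icc (0 : ℝ) 1)
    (hab : ∀ i ∈ s, |a i - b i| ≤ ε) : |∏ i ∈ s, a i - ∏ i ∈ s, b i| ≤ #s * ε := by
  classical
  induction s using Finset.induction_on with
  | empty => simp
  | insert i s hi ih =>
    simp only [forall_mem_insert] at ha hb hab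
    have hprod0 : 0 ≤ ∏ j ∈ s, b j := prod_nonneg fun j hj ↦ (hb.2 j hj).1
    have hprod1 : ∏ j ∈ s, b j ≤ 1 :=
      prod_le_one (fun j hj ↦ (hb.2 j hj).1) fun j hj ↦ (hb.2 j hj).2
    rw [prod_insert hi, prod_insert hi, card_insert_of_notMem hi]
    calc |a i * ∏ j ∈ s, a j - b i * ∏ j ∈ s, b j|
        = |a i * (∏ j ∈ s, a j - ∏ j ∈ s, b j) + (a i - b i) * ∏ j ∈ s, b j| := by ring_nf
      _ ≤ |a i * (∏ j ∈ s, a j - ∏ j ∈ s, b j)| + |(a i - b i) * ∏ j ∈ s, b j| := abs_add_le _ _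
      _ = a i * |∏ j ∈ s, a j - ∏ j ∈ s, b j| + |a i - b i| * ∏ j ∈ s, b j := by
          rw [abs_mul, abs_mul, abs_of_nonneg ha.1.1, abs_of_nonneg hprod0]
      _ ≤ 1 * (#s * ε) + ε * 1 := by
          gcongr
          · exact ha.1.2
          · exact ih ha.2 hb.2 hab.2
          · exact (abs_nonneg _).trans hab.1
          · exact hab.1
      _ = (#s + 1 : ℕ) * ε := by
          push_cast
          ring

variable {K N s : ℕ} [NeZero N] {a : Fin K → Fin s → ZMod N} {u : Finset (Fin s)}
  {z : Fin s → ℝ}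

theorem val_div_lt_iff_lt_ceil (x : ZMod N) (t : ℝ) :
    (x.val / N : ℝ) < t ↔ x.val < ⌈N * t⌉₊ := by
  rw [div_lt_iff₀ (mod_cast NeZero.pos N), Nat.lt_ceil, mul_comm]

theorem localDisc_val_div_projPoint :
    localDisc (fun n j ↦ ((a n j).val / N : ℝ)) (projPoint u z) =
      (#{n | ∀ i : u, (a n i).val < ⌈N * z i⌉₊} : ℝ) / K - ∏ i ∈ u, z i := by
  have hlt_one (x : ZMod N) : (x.val / N : ℝ) < 1 :=
    (div_lt_one (mod_cast NeZero.pos N)).2 (mod_cast x.val_lt)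
  have hmem (n : Fin K) : (∀ j, ((a n j).val / N : ℝ) < projPoint u z j) ↔
      ∀ i : u, (a n i).val < ⌈N * z i⌉₊ := by
    simp only [Subtype.forall, ← val_div_lt_iff_lt_ceil, projPoint]
    refine forall_congr' fun j ↦ ?_
    split_ifs with hj <;> simp only [hj, hlt_one, forall_const, IsEmpty.forall_iff]
  simp only [localDisc, hmem]
  simp only [projPoint, prod_ite_mem, univ_inter]

theorem abs_localDisc_val_div_projPoint_le (hz : ∀ j, z j ∈ Set.Icc (0 : ℝ) 1) :
    |localDisc (fun n j ↦ ((a n j).val / N : ℝ)) (projPoint u z)| ≤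
      |(#{n | ∀ i : u, (a n i).val < ⌈N * z i⌉₊} : ℝ) / K - ∏ i : u, (⌈N * z i⌉₊ / N : ℝ)| +
        #u / N := by
  have hN : (0 : ℝ) < N := mod_cast NeZero.pos N
  have hround : |∏ j ∈ u, (⌈N * z j⌉₊ / N : ℝ) - ∏ j ∈ u, z j| ≤ #u * (1 / N) := by
    refine abs_prod_sub_prod_le_card_mul (fun j _ ↦ ⟨by positivity, ?_⟩) (fun j _ ↦ hz j)
      fun j _ ↦ ?_
    · exact div_le_one_of_le₀ (mod_cast Nat.ceil_le.2 (mul_le_of_le_one_right hN.le (hz j).2)) hN.le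
    · rw [div_sub' hN.ne', abs_div, abs_of_pos hN, abs_sub_comm]
      gcongr
      exact Nat.abs_sub_ceil_le (mul_nonneg hN.le (hz j).1)
  rw [localDisc_val_div_projPoint, prod_coe_sort u fun j ↦ (⌈N * z j⌉₊ / N : ℝ),
    ← mul_one_div (#u : ℝ)]
  exact (abs_sub_le _ _ _).trans (add_le_add_right hround _)

theorem card_filter_fin_natCast (P : ZMod N → Prop) [DecidablePred P] :
    #{n : Fin N | P (n : ℕ)} = #{x | P x} := by
  refine card_bij (fun n _ ↦ ((n : ℕ) : ZMod N)) (fun n hn ↦ ?_) (fun n _ n' _ h ↦ ?_)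
    fun x hx ↦ ?_
  · simpa using hn
  · have hval := congrArg ZMod.val h
    rw [ZMod.val_cast_of_lt n.2, ZMod.val_cast_of_lt n'.2] at hval
    exact Fin.ext hval
  · exact ⟨⟨x.val, x.val_lt⟩, by simpa using hx, ZMod.natCast_zmod_val x⟩

end LocalDiscrepancy

section Korobov

variable {p s : ℕ}

theorem korobovQ_eq_val_div : korobovQ p s =
    fun (n : Fin (p ^ 2)) j ↦ ((((n : ℕ) : ZMod (p ^ 2)) ^ (j.1 + 1)).val / (p ^ 2 : ℕ) : ℝ) := by
  funext n j
  rw [← Nat.cast_pow, ZMod.val_natCast, ← Int.fract_div_natCast_eq_div_natCast_mod, korobovQ]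
  push_cast
  rfl

theorem abs_localDisc_korobovQ_le [Fact p.Prime] {D : ℕ} {u : Finset (Fin s)}
    (hu : ∀ j ∈ u, j.1 < D) {z : Fin s → ℝ}
    (hz : ∀ j, z j ∈ Set.Icc (0 : ℝ) 1) :
    |localDisc (korobovQ p s) (projPoint u z)| ≤ 2 * D / p * (3 + 3 * Real.log p) ^ #u := by
  have hp : (1 : ℝ) ≤ p := mod_cast (Fact.out : p.Prime).one_le
  have hL : 1 ≤ (3 + 3 * Real.log p) ^ #u := one_le_pow₀ (by linarith [Real.log_nonneg hp])
  have hcard : #u ≤ D := by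
    simpa using card_le_card_of_injOn Fin.val (t := range D)
      (fun j hj ↦ mem_coe.2 (mem_range.2 (hu j hj))) Fin.val_injective.injOn
  have hceil (i : u) : ⌈(p ^ 2 : ℕ) * z i⌉₊ ≤ p ^ 2 :=
    Nat.ceil_le.2 (mul_le_of_le_one_right (by positivity) (hz i).2)
  have hgrid := abs_card_pow_val_lt_sub_le (e := fun i : u ↦ i.1.1 + 1) (D := D)
    (fun i i' h ↦ Subtype.ext (Fin.ext (Nat.succ_injective h))) (fun _ ↦ Nat.succ_ne_zero _)
    (fun i ↦ hu i i.2) hceil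
  rw [Fintype.card_coe, ← card_filter_fin_natCast fun x : ZMod (p ^ 2) ↦
    ∀ i : u, (x ^ (i.1.1 + 1)).val < ⌈(p ^ 2 : ℕ) * z i⌉₊] at hgrid
  have hround : (#u / (p ^ 2 : ℕ) : ℝ) ≤ D / p * (3 + 3 * Real.log p) ^ #u := by
    calc (#u / (p ^ 2 : ℕ) : ℝ) ≤ D / p := by
          gcongr
          exact Nat.le_self_pow two_ne_zero p
      _ ≤ D / p * (3 + 3 * Real.log p) ^ #u := le_mul_of_one_le_right (by positivity) hL
  rw [korobovQ_eq_val_div]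
  refine (abs_localDisc_val_div_projPoint_le hz).trans ?_
  have hsum := add_le_add hgrid hround
  rwa [← add_mul, ← add_div, ← two_mul] at hsum

end Korobov

section Weights

theorem le_exp_mul_div {ε : ℝ} (hε : 0 < ε) (L : ℝ) : L ≤ Real.exp (ε * L) / ε := by
  rw [le_div_iff₀ hε, mul_comm]
  linarith [Real.add_one_le_exp (ε * L)]

theorem one_add_mul_le_mul_exp {a ε L : ℝ} (ha : 0 ≤ a) (hε : 0 < ε) (hL : 0 ≤ L) :
    1 + a * L ≤ (1 + a / ε) * Real.exp (ε * L) := by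
  calc 1 + a * L ≤ Real.exp (ε * L) + a * (Real.exp (ε * L) / ε) := by
        gcongr
        · exact Real.one_le_exp (by positivity)
        · exact le_exp_mul_div hε L
    _ = (1 + a / ε) * Real.exp (ε * L) := by ring

section Products

variable {ι : Type*} {g : ι → ℝ}

theorem exists_finset_prod_one_add_mul_le_exp (hg : ∀ i, 0 ≤ g i) (s : Finset ι) {ε : ℝ}
    (hε : 0 < ε) :
    ∃ K, 0 < K ∧ ∀ L : ℝ, 0 ≤ L → ∏ i ∈ s, (1 + g i * L) ≤ K * Real.exp (ε * L) := by
  classical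
  induction s using Finset.induction_on generalizing ε with
  | empty => exact ⟨1, one_pos, fun L hL ↦ by simpa using Real.one_le_exp (by positivity)⟩
  | insert i s hi ih =>
    obtain ⟨K, hK, hs⟩ := ih (half_pos hε)
    have hgi := hg i
    refine ⟨(1 + g i / (ε / 2)) * K, by positivity, fun L hL ↦ ?_⟩
    calc ∏ j ∈ insert i s, (1 + g j * L) = (1 + g i * L) * ∏ j ∈ s, (1 + g j * L) := prod_insert hi
      _ ≤ (1 + g i / (ε / 2)) * Real.exp (ε / 2 * L) * (K * Real.exp (ε / 2 * L)) :=
          mul_le_mul (one_add_mul_le_mul_exp hgi (half_pos hε) hL) (hs L hL)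
            (prod_nonneg fun j _ ↦ add_nonneg zero_le_one (mul_nonneg (hg j) hL)) (by positivity)
      _ = (1 + g i / (ε / 2)) * K * Real.exp (ε / 2 * L + ε / 2 * L) := by
          rw [Real.exp_add]
          ring
      _ = (1 + g i / (ε / 2)) * K * Real.exp (ε * L) := by rw [← add_mul, add_halves]

theorem exists_forall_prod_one_add_mul_le_exp (hg : ∀ i, 0 ≤ g i) (hsum : Summable g) {ε : ℝ}
    (hε : 0 < ε) :
    ∃ K, 0 < K ∧ ∀ (u : Finset ι) (L : ℝ), 0 ≤ L →
      ∏ i ∈ u, (1 + g i * L) ≤ K * Real.exp (ε * L) := by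
  classical
  obtain ⟨s, hs⟩ := summable_iff_vanishing_norm.1 hsum (ε / 2) (half_pos hε)
  obtain ⟨K, hK, hhead⟩ := exists_finset_prod_one_add_mul_le_exp hg s (half_pos hε)
  refine ⟨K, hK, fun u L hL ↦ ?_⟩
  have hone (i : ι) : 1 ≤ 1 + g i * L := le_add_of_nonneg_right (mul_nonneg (hg i) hL)
  have hnonneg (i : ι) : 0 ≤ 1 + g i * L := zero_le_one.trans (hone i)
  have htail : ∏ i ∈ u \ s, (1 + g i * L) ≤ Real.exp (ε / 2 * L) := by
    calc ∏ i ∈ u \ s, (1 + g i * L) ≤ Real.exp (∑ i ∈ u \ s, g i * L) :=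
          Real.prod_one_add_le_exp_sum _ fun i ↦ mul_nonneg (hg i) hL
      _ ≤ Real.exp (ε / 2 * L) := by
          rw [← sum_mul]
          gcongr
          exact (le_abs_self _).trans (hs _ sdiff_disjoint).le
  calc ∏ i ∈ u, (1 + g i * L) ≤ ∏ i ∈ s ∪ u \ s, (1 + g i * L) :=
        prod_le_prod_of_subset_of_one_le (by simp) (fun i _ ↦ hnonneg i) fun i _ _ ↦ hone i
    _ = (∏ i ∈ s, (1 + g i * L)) * ∏ i ∈ u \ s, (1 + g i * L) := prod_union disjoint_sdiff
    _ ≤ K * Real.exp (ε / 2 * L) * Real.exp (ε / 2 * L) :=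
        mul_le_mul (hhead L hL) htail (prod_nonneg fun i _ ↦ hnonneg i) (by positivity)
    _ = K * Real.exp (ε * L) := by rw [mul_assoc, ← Real.exp_add, ← add_mul, add_halves]

end Products

variable {γ : ℕ → ℝ}

theorem weightOf_mul_mul_pow_le {s : ℕ} (hγ : ∀ j, 1 ≤ j → 0 ≤ γ j) {B L : ℝ} (hL : 0 ≤ L)
    {u : Finset (Fin s)} {M : Fin s} (hM : M ∈ u) (hB : (M.1 + 1 : ℕ) * γ (M.1 + 1) ≤ B) :
    weightOf γ u * (M.1 + 1 : ℕ) * L ^ #u ≤ B * L * ∏ j ∈ u, (1 + γ (j.1 + 1) * L) := by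
  have hγL (j : Fin s) : 0 ≤ γ (j.1 + 1) * L := mul_nonneg (hγ _ j.1.succ_pos) hL
  have hsplit : weightOf γ u * L ^ #u =
      γ (M.1 + 1) * L * ∏ j ∈ u.erase M, (γ (j.1 + 1) * L) := by
    rw [mul_prod_erase u (fun j ↦ γ (j.1 + 1) * L) hM, prod_mul_distrib, prod_const, weightOf]
  have hprod : ∏ j ∈ u.erase M, (γ (j.1 + 1) * L) ≤ ∏ j ∈ u, (1 + γ (j.1 + 1) * L) :=
    (prod_le_prod (fun j _ ↦ hγL j) fun j _ ↦ le_add_of_nonneg_left zero_le_one).trans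
      (prod_le_prod_of_subset_of_one_le (erase_subset M u)
        (fun j _ ↦ add_nonneg zero_le_one (hγL j)) fun j _ _ ↦ le_add_of_nonneg_right (hγL j))
  have hB0 : 0 ≤ B := (mul_nonneg (Nat.cast_nonneg _) (hγ _ M.1.succ_pos)).trans hB
  calc weightOf γ u * (M.1 + 1 : ℕ) * L ^ #u
      = (M.1 + 1 : ℕ) * γ (M.1 + 1) * L * ∏ j ∈ u.erase M, (γ (j.1 + 1) * L) := by
        rw [mul_right_comm, hsplit]
        ring
    _ ≤ B * L * ∏ j ∈ u, (1 + γ (j.1 + 1) * L) :=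
        mul_le_mul (mul_le_mul_of_nonneg_right hB hL) hprod (prod_nonneg fun j _ ↦ hγL j)
          (mul_nonneg hB0 hL)

theorem exists_weightOf_mul_mul_pow_le_exp (hγ : ∀ j, 1 ≤ j → 0 ≤ γ j)
    (hbdd : BddAbove (Set.range fun j : ℕ ↦ j * γ j)) (hsum : Summable fun j ↦ γ (j + 1))
    {ε : ℝ} (hε : 0 < ε) :
    ∃ K, 0 < K ∧ ∀ (s : ℕ) (u : Finset (Fin s)), ∀ M ∈ u, ∀ L : ℝ, 0 ≤ L →
      weightOf γ u * (M.1 + 1 : ℕ) * L ^ #u ≤ K * Real.exp (ε * L) := by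
  obtain ⟨B, hB⟩ := hbdd
  have hB0 : 0 ≤ B := by simpa using hB ⟨0, rfl⟩
  obtain ⟨K, hK, hprod⟩ := exists_forall_prod_one_add_mul_le_exp (fun j ↦ hγ _ j.succ_pos)
    hsum (half_pos hε)
  refine ⟨(B + 1) / (ε / 2) * K, by positivity, fun s u M hM L hL ↦ ?_⟩
  have hprod_fin : ∏ j ∈ u, (1 + γ (j.1 + 1) * L) ≤ K * Real.exp (ε / 2 * L) := by
    simpa only [prod_map, Fin.valEmbedding_apply] using hprod (u.map Fin.valEmbedding) L hL
  calc weightOf γ u * (M.1 + 1 : ℕ) * L ^ #u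
      ≤ B * L * ∏ j ∈ u, (1 + γ (j.1 + 1) * L) :=
        weightOf_mul_mul_pow_le hγ hL hM (hB ⟨M.1 + 1, rfl⟩)
    _ ≤ (B + 1) * (Real.exp (ε / 2 * L) / (ε / 2)) * (K * Real.exp (ε / 2 * L)) := by
        have hprod_nonneg : 0 ≤ ∏ j ∈ u, (1 + γ (j.1 + 1) * L) :=
          prod_nonneg fun j _ ↦ add_nonneg zero_le_one (mul_nonneg (hγ _ j.1.succ_pos) hL)
        gcongr
        · exact le_add_of_nonneg_right zero_le_one
        · exact le_exp_mul_div (half_pos hε) L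
    _ = (B + 1) / (ε / 2) * K * Real.exp (ε / 2 * L + ε / 2 * L) := by
        rw [Real.exp_add]
        ring
    _ = (B + 1) / (ε / 2) * K * Real.exp (ε * L) := by rw [← add_mul, add_halves]

theorem bddAbove_range_natCast_mul_of_summable (hγ : ∀ j, 1 ≤ j → 0 ≤ γ j)
    (hdec : ∀ j, 1 ≤ j → γ (j + 1) ≤ γ j) (hsum : Summable fun j ↦ γ (j + 1)) :
    BddAbove (Set.range fun j : ℕ ↦ j * γ j) := by
  have hanti : Antitone fun j ↦ γ (j + 1) := antitone_nat_of_succ_le fun j ↦ hdec _ j.succ_pos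
  refine ⟨∑' j, γ (j + 1), ?_⟩
  rintro _ ⟨j, rfl⟩
  calc j * γ j = ∑ _i ∈ range j, γ j := by rw [sum_const, card_range, nsmul_eq_mul]
    _ ≤ ∑ i ∈ range j, γ (i + 1) := sum_le_sum fun i hi ↦ by
        obtain ⟨k, rfl⟩ := Nat.exists_eq_add_of_lt (mem_range.1 hi)
        exact hanti (Nat.le_add_right i k)
    _ ≤ ∑' i, γ (i + 1) := hsum.sum_le_tsum _ fun i _ ↦ hγ _ i.succ_pos

end Weights

theorem wStarDisc_le {N s : ℕ} {γ : ℕ → ℝ} {x : Fin N → Fin s → ℝ} {b : ℝ} (hb : 0 ≤ b)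
    (h : ∀ z : Fin s → ℝ, (∀ j, z j ∈ Set.Icc (0 : ℝ) 1) → ∀ u : Finset (Fin s), u.Nonempty →
      weightOf γ u * |localDisc x (projPoint u z)| ≤ b) : wStarDisc γ x ≤ b := by
  refine Real.sSup_le ?_ hb
  rintro _ ⟨z, hz, u, hu, rfl⟩
  exact h z hz u hu

theorem wStarDisc_korobovQ_le_general (γ : ℕ → ℝ) (hγ : ∀ j, 1 ≤ j → 0 ≤ γ j)
    (hbdd : BddAbove (Set.range fun j : ℕ ↦ j * γ j)) (hsum : Summable fun j ↦ γ (j + 1))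
    (δ : ℝ) (hδ : 0 < δ) :
    ∃ C : ℝ, 0 < C ∧ ∀ p s : ℕ, p.Prime →
      wStarDisc γ (korobovQ p s) ≤ C * (p : ℝ) ^ (-(1 - δ) : ℝ) := by
  obtain ⟨K, hK, hweight⟩ := exists_weightOf_mul_mul_pow_le_exp hγ hbdd hsum
    (div_pos hδ three_pos)
  refine ⟨2 * K * Real.exp δ, by positivity, fun p s hp ↦
    wStarDisc_le (by positivity) fun z hz u hu ↦ ?_⟩
  have : Fact p.Prime := ⟨hp⟩
  have hp0 : (0 : ℝ) < p := mod_cast hp.pos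
  have hL : 0 ≤ 3 + 3 * Real.log p := by positivity
  have hexp : Real.exp (δ / 3 * (3 + 3 * Real.log p)) = Real.exp δ * (p : ℝ) ^ δ := by
    rw [Real.rpow_def_of_pos hp0, ← Real.exp_add]
    ring_nf
  calc weightOf γ u * |localDisc (korobovQ p s) (projPoint u z)|
      ≤ weightOf γ u *
          (2 * ((u.max' hu).1 + 1 : ℕ) / p * (3 + 3 * Real.log p) ^ #u) := by
        refine mul_le_mul_of_nonneg_left (abs_localDisc_korobovQ_le
          (fun j hj ↦ Nat.lt_succ_of_le (u.le_max' j hj)) hz) ?_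
        exact prod_nonneg fun j _ ↦ hγ _ j.1.succ_pos
    _ = 2 / p * (weightOf γ u * ((u.max' hu).1 + 1 : ℕ) * (3 + 3 * Real.log p) ^ #u) := by ring
    _ ≤ 2 / p * (K * Real.exp (δ / 3 * (3 + 3 * Real.log p))) :=
        mul_le_mul_of_nonneg_left (hweight s u _ (u.max'_mem hu) _ hL) (by positivity)
    _ = 2 * K * Real.exp δ * (p : ℝ) ^ (-(1 - δ)) := by
        rw [hexp, neg_sub, Real.rpow_sub hp0, Real.rpow_one]
        ring

/-- for non-increasing, summable, nonnegative weights and any `δ > 0`,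
`D*_γ(Q_{p²,s}) ≤ C p^{−(1−δ)}` with `C` independent of the prime `p` and of `s`. -/
theorem wStarDisc_korobovQ_le (γ : ℕ → ℝ) (hγ : ∀ j, 1 ≤ j → 0 ≤ γ j)
    (hdec : ∀ j, 1 ≤ j → γ (j + 1) ≤ γ j)
    (hsum : Summable fun j => γ (j + 1)) (δ : ℝ) (hδ : 0 < δ) :
    ∃ C : ℝ, 0 < C ∧ ∀ p s : ℕ, p.Prime → 1 ≤ s →
      wStarDisc γ (korobovQ p s) ≤ C * (p : ℝ) ^ (-(1 - δ) : ℝ) := by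
  obtain ⟨C, hC, h⟩ := wStarDisc_korobovQ_le_general γ hγ
    (bddAbove_range_natCast_mul_of_summable hγ hdec hsum) hsum δ hδ
  exact ⟨C, hC, fun p s hp _ ↦ h p s hp⟩
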